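/- arXiv:2110.00705 — 5 statements merged into one kernel-verified Lean document; each statement's English description precedes it below -/
import Mathlib

section
/- Let q be a power of a prime, let d ≥ 1, let a be a divisor of d, and let r be an integer with gcd(r,d) = 1. If an integer m satisfies q^{ar}·m ≡ m (mod q^d − 1), then (q^d − 1)/(q^a − 1) divides m. -/
/-!
The modulus `q ^ d - 1` divides `(q ^ (a * r) - 1) * m`, hence also
`gcd (q ^ (a * r) - 1) (q ^ d - 1) * m`. This gcd is `q ^ gcd (a * r) d - 1 = q ^ a - 1`, because
`a ∣ d` and `r` is coprime to `d`; cancelling the nonzero factor `q ^ a - 1` gives the claim.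
-/

/-- Let `q` be a power of a prime, `d ≥ 1`, `a ∣ d`, `gcd(r,d) = 1`.
If an integer `m` satisfies `q^(a·r) · m ≡ m (mod q^d − 1)`, then
`(q^d − 1)/(q^a − 1)` divides `m`. -/
theorem stmt_1 (p q d a r : ℕ) (hp : p.Prime) (hq : ∃ k : ℕ, 0 < k ∧ q = p ^ k)
    (hd : 1 ≤ d) (ha : a ∣ d) (hr : Nat.gcd r d = 1) (m : ℤ)
    (hm : (q : ℤ) ^ (a * r) * m ≡ m [ZMOD ((q : ℤ) ^ d - 1)]) :
    ((q : ℤ) ^ d - 1) / ((q : ℤ) ^ a - 1) ∣ m := by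
  have hq1 : 1 < q := by
    obtain ⟨k, hk, rfl⟩ := hq
    exact Nat.one_lt_pow hk.ne' hp.one_lt
  obtain ⟨e, rfl⟩ := ha
  have ha0 : a ≠ 0 := by rintro rfl; simp at hd
  have hgcd : Nat.gcd (a * r) (a * e) = a := by
    rw [Nat.gcd_mul_left, (Nat.Coprime.coprime_mul_left_right hr : Nat.gcd r e = 1), mul_one]
  have hpos : (q : ℤ) ^ a - 1 ≠ 0 := by
    have : 1 < (q : ℤ) ^ a := one_lt_pow₀ (by exact_mod_cast hq1) ha0
    omega
  have cast (n : ℕ) : ((q ^ n - 1 : ℕ) : ℤ) = (q : ℤ) ^ n - 1 := by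
    rw [Nat.cast_sub (Nat.one_le_pow _ _ (by omega))]; push_cast; rfl
  have hg : (Int.gcd ((q : ℤ) ^ (a * r) - 1) ((q : ℤ) ^ (a * e) - 1) : ℤ) = (q : ℤ) ^ a - 1 := by
    rw [← cast, ← cast, Int.gcd_natCast_natCast, Nat.pow_sub_one_gcd_pow_sub_one, hgcd, cast]
  have h1 : (q : ℤ) ^ (a * e) - 1 ∣ ((q : ℤ) ^ (a * r) - 1) * m := by
    rw [sub_one_mul]; exact hm.symm.dvd
  -- Bézout: a modulus dividing `x * m` divides `gcd(x, modulus) * m`.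
  have h2 : (q : ℤ) ^ (a * e) - 1 ∣ ((q : ℤ) ^ a - 1) * m := by
    rw [← hg, Int.gcd_eq_gcd_ab, add_mul, mul_right_comm, mul_assoc _ _ m]
    exact dvd_add (h1.mul_right _) (dvd_mul_right _ _)
  obtain ⟨c, hc⟩ : (q : ℤ) ^ a - 1 ∣ (q : ℤ) ^ (a * e) - 1 := by
    rw [← hg]; exact Int.gcd_dvd_right _ _
  rw [hc] at h2 ⊢
  rw [Int.mul_ediv_cancel_left _ hpos]
  exact (mul_dvd_mul_iff_left hpos).mp h2
end

section
/- Fix i ≥ 0 and y ∈ k_D, and let φ_{i,y} : k_D → k_D be the k_F-linear map x ↦ σ(x)·y − x·σ^i(y). Then the image of φ_{i,y} equals ker(Tr_{k_D/k_F}) · ∏_{0 ≤ j ≤ i} σ^j(y); in particular, for y ∈ k_D^× the image of φ_{i,y} is a k_F-subspace of k_D of codimension one, and the kernel of φ_{i,y} is one-dimensional over k_F. -/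
/-!
Put `w = ∏_{j < i} σ^j(y)` and `P = ∏_{j ≤ i} σ^j(y)`, so that `σ(w)·y = P = w·σ^i(y)`. Hence
`φ_{i,y}(w·x) = P·(σ(x) - x)` (`phiMap_mul_prod`), and for `y ≠ 0`, where `x ↦ w·x` is a
bijection, the image of `φ_{i,y}` is `P` times the image of `σ - 1`; for `y = 0` both sides of the
claim vanish. It remains to see that the image of `σ - 1` is the trace-zero hyperplane (additive
Hilbert 90, `range_sub_id_eq_ker_trace`): it lies in it as the trace is `σ`-invariant, and it has
codimension one because the fixed points of `σ` are exactly `k_F` (`mem_range_algebraMap_of_fixed`,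
where `gcd(r, d) = 1` enters).
-/

/-- The `k_F`-linear map `φ_{i,y} : x ↦ σ(x)·y − x·σ^i(y)` on `k_D`. -/
noncomputable def phiMap (kF kD : Type) [Field kF] [Field kD] [Algebra kF kD]
    (σ : kD ≃ₐ[kF] kD) (i : ℕ) (y : kD) : kD →ₗ[kF] kD :=
  (LinearMap.mulRight kF y) ∘ₗ σ.toLinearMap - LinearMap.mulRight kF ((σ ^ i) y)

open Module

/-- A fixed point of `x ↦ x ^ q ^ r` in a field with `q ^ d` elements is a periodic point of
`x ↦ x ^ q` of periods `r` and `d`, hence of period `gcd(r, d) = 1`. A fixed point of this Frobenius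
map is fixed by the whole Galois group, so it lies in the base field. -/
lemma mem_range_algebraMap_of_fixed {kF kD : Type} [Field kF] [Field kD] [Algebra kF kD]
    [Fintype kF] [Fintype kD] {q d r : ℕ} (hr : Nat.gcd r d = 1)
    (hcardF : Fintype.card kF = q) (hcardD : Fintype.card kD = q ^ d)
    {x : kD} (hx : x ^ q ^ r = x) : x ∈ Set.range (algebraMap kF kD) := by
  have per : ∀ n : ℕ, x ^ q ^ n = x → Function.IsPeriodicPt (fun z : kD => z ^ q) n x := by
    intro n hn
    rw [Function.IsPeriodicPt, Function.IsFixedPt, pow_iterate]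
    exact hn
  have hd : x ^ q ^ d = x := by rw [← hcardD]; exact FiniteField.pow_card x
  have h1 := (per r hx).gcd (per d hd)
  rw [hr] at h1
  have hfrob : FiniteField.frobeniusAlgEquivOfAlgebraic kF kD x = x := by
    rw [FiniteField.coe_frobeniusAlgEquivOfAlgebraic, hcardF]
    exact h1
  rw [IsGalois.mem_range_algebraMap_iff_fixed]
  intro f
  obtain ⟨n, rfl⟩ := (FiniteField.bijective_frobeniusAlgEquivOfAlgebraic_pow kF kD).2 f
  rw [AlgEquiv.coe_pow]
  exact Function.iterate_fixed hfrob n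

lemma finrank_ker_trace {kF kD : Type} [Field kF] [Field kD] [Algebra kF kD]
    [Fintype kF] [Fintype kD] :
    finrank kF (LinearMap.ker (Algebra.trace kF kD)) + 1 = finrank kF kD := by
  have h := LinearMap.finrank_range_add_finrank_ker (Algebra.trace kF kD)
  rw [LinearMap.range_eq_top.2 (Algebra.trace_surjective kF kD), finrank_top, finrank_self] at h
  omega

/-- Additive Hilbert 90 for an automorphism whose fixed points all lie in the base field. -/
lemma range_sub_id_eq_ker_trace {kF kD : Type} [Field kF] [Field kD] [Algebra kF kD]
    [Fintype kF] [Fintype kD] (σ : kD ≃ₐ[kF] kD)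
    (hfix : ∀ x : kD, σ x = x → x ∈ Set.range (algebraMap kF kD)) :
    LinearMap.range (σ.toLinearMap - LinearMap.id) = LinearMap.ker (Algebra.trace kF kD) := by
  have hker : LinearMap.ker (σ.toLinearMap - LinearMap.id) = kF ∙ (1 : kD) := by
    ext x
    rw [LinearMap.mem_ker, Submodule.mem_span_singleton]
    constructor
    · intro h
      obtain ⟨a, rfl⟩ := hfix x (sub_eq_zero.1 h)
      exact ⟨a, (Algebra.algebraMap_eq_smul_one a).symm⟩
    · rintro ⟨a, rfl⟩
      simp
  apply Submodule.eq_of_le_of_finrank_eq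
  · rintro _ ⟨x, rfl⟩
    rw [LinearMap.mem_ker, LinearMap.sub_apply, map_sub, sub_eq_zero]
    exact Algebra.trace_eq_of_algEquiv σ x
  · have h1 := LinearMap.finrank_range_add_finrank_ker (σ.toLinearMap - LinearMap.id)
    rw [hker, finrank_span_singleton one_ne_zero] at h1
    have h2 := finrank_ker_trace (kF := kF) (kD := kD)
    omega

lemma phiMap_mul_prod {kF kD : Type} [Field kF] [Field kD] [Algebra kF kD]
    (σ : kD ≃ₐ[kF] kD) (i : ℕ) (y x : kD) :
    phiMap kF kD σ i y (x * ∏ j ∈ Finset.range i, (σ ^ j) y)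
      = (σ x - x) * ∏ j ∈ Finset.range (i + 1), (σ ^ j) y := by
  have h1 : σ (∏ j ∈ Finset.range i, (σ ^ j) y) * y = ∏ j ∈ Finset.range (i + 1), (σ ^ j) y := by
    rw [Finset.prod_range_succ', map_prod]
    simp [pow_succ']
  have h2 := Finset.prod_range_succ (fun j => (σ ^ j) y) i
  have h3 : phiMap kF kD σ i y (x * ∏ j ∈ Finset.range i, (σ ^ j) y)
      = σ (x * ∏ j ∈ Finset.range i, (σ ^ j) y) * y
        - x * (∏ j ∈ Finset.range i, (σ ^ j) y) * (σ ^ i) y := rfl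
  rw [h3, map_mul, mul_assoc, h1, mul_assoc, ← h2, sub_mul]

/-- Fix `i ≥ 0` and `y ∈ k_D`, and let `φ_{i,y} : k_D → k_D` be the
`k_F`-linear map `x ↦ σ(x)·y − x·σ^i(y)`.  Then the image of `φ_{i,y}` equals
`ker(Tr_{k_D/k_F}) · ∏_{0 ≤ j ≤ i} σ^j(y)`; in particular, for `y ∈ k_D^×` the image of
`φ_{i,y}` is a `k_F`-subspace of `k_D` of codimension one, and the kernel of `φ_{i,y}` is
one-dimensional over `k_F`. -/
theorem stmt_6 (p q d r : ℕ) (hp : p.Prime) (hq : ∃ k : ℕ, 0 < k ∧ q = p ^ k)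
    (hd : 1 ≤ d) (hr : Nat.gcd r d = 1)
    (kF kD : Type) [Field kF] [Field kD] [Algebra kF kD] [Fintype kF] [Fintype kD]
    (hcardF : Fintype.card kF = q) (hcardD : Fintype.card kD = q ^ d)
    (σ : kD ≃ₐ[kF] kD) (hσ : ∀ x : kD, σ x = x ^ q ^ r)
    (i : ℕ) (y : kD) :
    (∀ x : kD, phiMap kF kD σ i y x = σ x * y - x * (σ ^ i) y) ∧
    LinearMap.range (phiMap kF kD σ i y)
      = Submodule.map (LinearMap.mulRight kF (∏ j ∈ Finset.range (i + 1), (σ ^ j) y))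
          (LinearMap.ker (Algebra.trace kF kD)) ∧
    (y ≠ 0 →
      Module.finrank kF (LinearMap.range (phiMap kF kD σ i y)) = d - 1 ∧
      Module.finrank kF (LinearMap.ker (phiMap kF kD σ i y)) = 1) := by
  have hrange : LinearMap.range (phiMap kF kD σ i y)
      = Submodule.map (LinearMap.mulRight kF (∏ j ∈ Finset.range (i + 1), (σ ^ j) y))
          (LinearMap.ker (Algebra.trace kF kD)) := by
    rw [← range_sub_id_eq_ker_trace σ fun x hx =>
      mem_range_algebraMap_of_fixed hr hcardF hcardD ((hσ x).symm.trans hx)]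
    by_cases hy : y = 0
    · have h1 : phiMap kF kD σ i y = 0 := by
        ext x
        simp [phiMap, hy]
      have h2 : ∏ j ∈ Finset.range (i + 1), (σ ^ j) y = 0 :=
        Finset.prod_eq_zero (Finset.mem_range.2 i.succ_pos) (by simp [hy])
      rw [h1, h2, LinearMap.range_zero, LinearMap.mulRight_zero_eq_zero, Submodule.map_zero]
    · have hw : ∏ j ∈ Finset.range i, (σ ^ j) y ≠ 0 :=
        Finset.prod_ne_zero_iff.2 fun j _ => (map_ne_zero (σ ^ j)).2 hy
      ext z
      constructor
      · rintro ⟨x, rfl⟩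
        refine ⟨_, ⟨x / ∏ j ∈ Finset.range i, (σ ^ j) y, rfl⟩, ?_⟩
        have h := phiMap_mul_prod σ i y (x / ∏ j ∈ Finset.range i, (σ ^ j) y)
        rw [div_mul_cancel₀ x hw] at h
        exact h.symm
      · rintro ⟨_, ⟨x, rfl⟩, rfl⟩
        exact ⟨_, phiMap_mul_prod σ i y x⟩
  refine ⟨fun x => rfl, hrange, fun hy => ?_⟩
  have hP : ∏ j ∈ Finset.range (i + 1), (σ ^ j) y ≠ 0 :=
    Finset.prod_ne_zero_iff.2 fun j _ => (map_ne_zero (σ ^ j)).2 hy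
  have hdim : finrank kF kD = d := by
    have h := Module.card_eq_pow_finrank (K := kF) (V := kD)
    rw [hcardD, hcardF] at h
    have hq1 : 2 ≤ q := hcardF ▸ Fintype.one_lt_card
    exact (Nat.pow_right_injective hq1 h).symm
  have htr := finrank_ker_trace (kF := kF) (kD := kD)
  have hfr : finrank kF (LinearMap.range (phiMap kF kD σ i y))
      = finrank kF (LinearMap.ker (Algebra.trace kF kD)) := by
    rw [hrange]
    exact (Submodule.equivMapOfInjective _ (mul_left_injective₀ hP) _).finrank_eq.symm
  have hrn := LinearMap.finrank_range_add_finrank_ker (phiMap kF kD σ i y)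
  omega
end

section
/- Suppose d > 4. Then for every α ∈ k_D^× there exist x, y ∈ k_D^× such that x·σ(y) − σ(x)·y = α and the ratio x/y does not lie in any proper subfield of k_D. (Equivalently, in D the commutator [1+[x]ϖ_D, 1+[y]ϖ_D] lies in I_2 and has image α under the canonical isomorphism I_2/I_3 ≅ k_D.) -/
/-!
Put `t = x / y` and `z = y⁻¹`. The equation `x σ(y) - σ(x) y = α` becomes `t - σ t = α z σ(z)`, so
one looks for a nonzero `z` and a solution `t` outside every proper subfield.

*Many pairs.* The image of `t ↦ t - σ t` is a hyperplane over `kF`, hence the kernel of a linear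
functional `f` (`exists_functional`). The right-hand side lies in it exactly when `z` is a zero of
the quadratic form `f (α z σ(z))` in `d` variables. Such a form has at least `q ^ (d - 2)` zeros
(`card_isotropic_ge`): if `W` is a maximal anisotropic subspace, then `dim W ≤ 2` by
Chevalley–Warning, and by maximality every class modulo `W` contains a zero. Each nonzero zero `z`
admits the `q` solutions `t + c`, `c ∈ kF`, so there are at least `q (q ^ (d - 2) - 1)` pairs
`(t, z)`.

*Few bad pairs.* Let `|kD| = p ^ n`. If `t` lies in a proper subfield then `t ^ p ^ j = t` for some
`1 ≤ j ≤ n / 2`, and `t ^ p ≠ t` because `σ t ≠ t`; this leaves at most `∑ (p ^ j - p)` values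
of `t`. For given `t` the element `z` satisfies `z ^ (q ^ r + 1) = (t - σ t) / α`, and this has at
most `m` solutions, where `m = 2` for odd `d` and `m = q + 1` for even `d`.

For `d > 4` the second count is strictly smaller than the first (`bound_odd`, `bound_even`). The
smallest cases, such as `q = 2`, `d = 5` or `6`, are tight enough that the prime field has to be
removed from every subfield in the count.
-/

/-! ### Zeros of quadratic forms over finite fields -/

/-- Chevalley's theorem for a quadratic form, presented as the diagonal of a bilinear form: if it has
no nontrivial zero, it has at most two variables. -/
lemma finrank_le_two_of_anisotropic {K V : Type*} [Field K] [Fintype K] [AddCommGroup V]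
    [Module K V] [FiniteDimensional K V] (B : V →ₗ[K] V →ₗ[K] K)
    (hB : ∀ v, B v v = 0 → v = 0) : Module.finrank K V ≤ 2 := by
  classical
  by_contra! hlt
  obtain ⟨p, hchar⟩ := CharP.exists K
  have hp : p.Prime := CharP.char_is_prime K p
  let b := Module.finBasis K V
  let P : MvPolynomial (Fin (Module.finrank K V)) K :=
    ∑ i, ∑ j, MvPolynomial.C (B (b i) (b j)) * (MvPolynomial.X i * MvPolynomial.X j)
  have hdeg : P.totalDegree ≤ 2 := by
    refine MvPolynomial.totalDegree_finsetSum_le fun i _ =>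
      MvPolynomial.totalDegree_finsetSum_le fun j _ => ?_
    refine (MvPolynomial.totalDegree_mul _ _).trans ?_
    rw [MvPolynomial.totalDegree_C, zero_add]
    refine (MvPolynomial.totalDegree_mul _ _).trans ?_
    simp
  have heval : ∀ c, MvPolynomial.eval c P = B (∑ i, c i • b i) (∑ i, c i • b i) := by
    intro c
    simp only [P, map_sum, map_mul, MvPolynomial.eval_C, MvPolynomial.eval_X, LinearMap.sum_apply,
      map_smul, LinearMap.smul_apply, smul_eq_mul]
    simp only [Finset.mul_sum]
    rw [Finset.sum_comm]
    refine Finset.sum_congr rfl fun i _ => Finset.sum_congr rfl fun j _ => ?_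
    ring
  have hzero : ∀ c, MvPolynomial.eval c P = 0 ↔ c = 0 := by
    intro c
    rw [heval]
    constructor
    · intro h
      have h0 := hB _ h
      ext i
      exact Fintype.linearIndependent_iff.mp b.linearIndependent c h0 i
    · rintro rfl
      simp
  have hdvd : p ∣ Fintype.card {c // MvPolynomial.eval c P = 0} :=
    char_dvd_card_solutions p (by simpa using hdeg.trans_lt hlt)
  have hone : Fintype.card {c // MvPolynomial.eval c P = 0} = 1 := by
    rw [Fintype.card_eq_one_iff]
    exact ⟨⟨0, (hzero 0).2 rfl⟩, fun c => Subtype.ext ((hzero _).1 c.2)⟩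
  rw [hone] at hdvd
  exact hp.one_lt.ne' (Nat.dvd_one.mp hdvd)

/-- A quadratic form in `n` variables over a field with `q` elements has at least `q ^ (n - 2)`
zeros. (For `n < 2` the truncated exponent is `0`, and the bound counts the zero vector.) -/
lemma card_isotropic_ge {K V : Type*} [Field K] [Fintype K] [AddCommGroup V]
    [Module K V] [Fintype V] (B : V →ₗ[K] V →ₗ[K] K) [DecidablePred fun v => B v v = 0] :
    Fintype.card K ^ (Module.finrank K V - 2) ≤ (Finset.univ.filter fun v => B v v = 0).card := by
  classical
  obtain ⟨W, hW⟩ := (Set.toFinite {W : Submodule K V | ∀ w ∈ W, B w w = 0 → w = 0}).exists_maximal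
    ⟨⊥, by simp⟩
  have hWan : ∀ w ∈ W, B w w = 0 → w = 0 := hW.1
  have hWdim : Module.finrank K W ≤ 2 :=
    finrank_le_two_of_anisotropic (B.domRestrict₁₂ W W)
      fun w h => Subtype.ext (hWan w w.2 h)
  have hsurj : ∀ u : V ⧸ W, ∃ v, B v v = 0 ∧ W.mkQ v = u := by
    intro u
    obtain ⟨v, rfl⟩ := W.mkQ_surjective u
    by_cases hv : v ∈ W
    · exact ⟨0, by simp, by simpa using ((Submodule.Quotient.mk_eq_zero W).2 hv).symm⟩
    -- `W + ⟨v⟩` is no longer anisotropic; its nontrivial zeros lie outside `W`, so one of them can be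
    -- rescaled to be congruent to `v` modulo `W`.
    have hnot : ¬ ∀ w ∈ W ⊔ Submodule.span K {v}, B w w = 0 → w = 0 := fun h =>
      hv (hW.2 h le_sup_left (Submodule.mem_sup_right (Submodule.mem_span_singleton_self v)))
    push Not at hnot
    obtain ⟨z, hz, hBz, hz0⟩ := hnot
    obtain ⟨w, hw, y, hy, rfl⟩ := Submodule.mem_sup.1 hz
    obtain ⟨c, rfl⟩ := Submodule.mem_span_singleton.1 hy
    have hc : c ≠ 0 := by
      rintro rfl
      exact hz0 (by simpa using hWan w hw (by simpa using hBz))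
    refine ⟨c⁻¹ • (w + c • v), by simp only [map_smul, LinearMap.smul_apply, hBz, smul_zero], ?_⟩
    have : W.mkQ w = 0 := by simpa using hw
    rw [map_smul, map_add, this, map_smul, zero_add, inv_smul_smul₀ hc]
  have hcard : Fintype.card (V ⧸ W) ≤ (Finset.univ.filter fun v => B v v = 0).card := by
    rw [← Finset.card_univ]
    refine Finset.card_le_card_of_surjOn W.mkQ fun u _ => ?_
    obtain ⟨v, hv, rfl⟩ := hsurj u
    exact ⟨v, by simpa using hv, rfl⟩
  refine le_trans ?_ hcard
  rw [Module.card_eq_pow_finrank (K := K) (V := V ⧸ W)]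
  have := Submodule.finrank_quotient_add_finrank W
  exact Nat.pow_le_pow_right Fintype.card_pos (by omega)

/-! ### Numerical estimates -/

/-- The slack `2 + 2 * h` is what makes the cases `q = 2`, `d = 5, 6` go through. -/
lemma sum_pow_sub_le {p : ℕ} (hp : 2 ≤ p) (h : ℕ) :
    (∑ j ∈ Finset.Icc 1 h, (p ^ j - p)) + 2 + 2 * h ≤ 2 * p ^ h := by
  induction h with
  | zero => simp
  | succ h ih =>
    rw [Finset.sum_Icc_succ_top (by omega)]
    have h1 : p ≤ p ^ (h + 1) := Nat.le_self_pow (by omega) p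
    have h2 : 2 * p ^ h + 2 ≤ p ^ (h + 1) + p := by
      have : 1 ≤ p ^ h := Nat.one_le_pow _ _ (by omega)
      rw [pow_succ]
      nlinarith
    omega

lemma bound_odd {p q k e : ℕ} (hp : 2 ≤ p) (hk : 0 < k) (hq : q = p ^ k) (he : 2 ≤ e) :
    2 * ∑ j ∈ Finset.Icc 1 (k * (2 * e + 1) / 2), (p ^ j - p) < q * (q ^ (2 * e + 1 - 2) - 1) := by
  set h := k * (2 * e + 1) / 2 with hh
  have hsum := sum_pow_sub_le hp h
  -- `⌊k / 2⌋ + 1 ≤ k`; this gains the factor `p ≥ 2` in the bound `2 * p ^ h ≤ q ^ (e + 1)`.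
  have hh2 : h + 1 ≤ k * (e + 1) := by
    have : k * (2 * e + 1) = 2 * (k * e) + k := by ring
    have : k * (e + 1) = k * e + k := by ring
    omega
  have hh3 : 2 ≤ h := by
    have : 1 * 5 ≤ k * (2 * e + 1) := Nat.mul_le_mul hk (by omega)
    omega
  have hq2 : 2 ≤ q := hq ▸ hp.trans (Nat.le_self_pow hk.ne' p)
  have h1 : 2 * p ^ h ≤ q ^ (e + 1) := by
    rw [hq, ← pow_mul]
    calc 2 * p ^ h ≤ p * p ^ h := Nat.mul_le_mul_right _ hp
      _ = p ^ (h + 1) := by ring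
      _ ≤ _ := Nat.pow_le_pow_right (by omega) hh2
  have h2 : q ^ (e + 2) ≤ q ^ (2 * e) := Nat.pow_le_pow_right (by omega) (by omega)
  have h3 : q * (q ^ (2 * e + 1 - 2) - 1) = q ^ (2 * e) - q := by
    rw [Nat.mul_sub, mul_one, ← pow_succ']
    congr 2
    omega
  have h4 : q ^ 3 ≤ q ^ (e + 1) := Nat.pow_le_pow_right (by omega) (by omega)
  have h5 : q ^ (e + 2) = q * q ^ (e + 1) := by ring
  rw [h3]
  rcases hq2.eq_or_lt with rfl | hq3
  · omega
  · have h6 : 3 * q ^ (e + 1) ≤ q * q ^ (e + 1) := Nat.mul_le_mul_right _ hq3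
    have h7 : q ≤ q ^ 3 := Nat.le_self_pow (by omega) q
    omega

lemma bound_even {p q k e : ℕ} (hp : 2 ≤ p) (hk : 0 < k) (hq : q = p ^ k) (he : 3 ≤ e) :
    (q + 1) * ∑ j ∈ Finset.Icc 1 (k * (2 * e) / 2), (p ^ j - p) < q * (q ^ (2 * e - 2) - 1) := by
  have hh : k * (2 * e) / 2 = k * e := by
    rw [show k * (2 * e) = 2 * (k * e) by ring]
    omega
  rw [hh]
  have hsum := sum_pow_sub_le hp (k * e)
  have hke : 1 * 3 ≤ k * e := Nat.mul_le_mul hk he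
  rw [pow_mul, ← hq] at hsum
  have hq2 : 2 ≤ q := hq ▸ hp.trans (Nat.le_self_pow hk.ne' p)
  set S := ∑ j ∈ Finset.Icc 1 (k * e), (p ^ j - p)
  have hS : S + 8 ≤ 2 * q ^ e := by omega
  have h3 : q * (q ^ (2 * e - 2) - 1) = q ^ (2 * e - 1) - q := by
    rw [Nat.mul_sub, mul_one, ← pow_succ']
    congr 2
    omega
  rw [h3]
  have h4 : (q + 1) * S + 8 * (q + 1) ≤ 2 * (q * q ^ e) + 2 * q ^ e := by nlinarith
  rcases hq2.eq_or_lt with rfl | hq3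
  · rcases he.eq_or_lt with rfl | he4
    · norm_num at hS ⊢
      omega
    · have h5 : 2 ^ (e + 3) ≤ 2 ^ (2 * e - 1) := Nat.pow_le_pow_right (by omega) (by omega)
      have h6 : 2 ^ (e + 3) = 8 * 2 ^ e := by ring
      omega
  · have h5 : q ^ (e + 2) ≤ q ^ (2 * e - 1) := Nat.pow_le_pow_right (by omega) (by omega)
    have h6 : q ^ (e + 2) = q * (q * q ^ e) := by ring
    have h7 : 3 * (q * q ^ e) ≤ q * (q * q ^ e) := Nat.mul_le_mul_right _ hq3
    have h8 : 3 * q ^ e ≤ q * q ^ e := Nat.mul_le_mul_right _ hq3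
    omega

/-! ### Powers and subfields in finite fields -/

/-- The fixed points of the `a`-th power of the `q`-Frobenius on a field with `q ^ d` elements are
fixed by its `gcd a d`-th power. -/
lemma pow_gcd_fixed {L : Type*} [Field L] [Fintype L] {q d a : ℕ}
    (hL : Fintype.card L = q ^ d) {x : L} (hx : x ^ q ^ a = x) : x ^ q ^ Nat.gcd a d = x := by
  have key : ∀ n, Function.IsPeriodicPt (fun y : L => y ^ q) n x ↔ x ^ q ^ n = x := by
    intro n
    rw [Function.IsPeriodicPt, Function.IsFixedPt, pow_iterate]
  have hd : x ^ q ^ d = x := hL ▸ FiniteField.pow_card x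
  exact (key _).1 (((key _).2 hx).gcd ((key _).2 hd))

lemma card_pow_eq_self_le {L : Type*} [Field L] [Fintype L] [DecidableEq L] {n : ℕ} (hn : 1 < n) :
    (Finset.univ.filter fun x : L => x ^ n = x).card ≤ n := by
  have h0 : (Polynomial.X ^ n - Polynomial.X : Polynomial L) ≠ 0 :=
    FiniteField.X_pow_card_sub_X_ne_zero L hn
  calc _ ≤ (Polynomial.X ^ n - Polynomial.X : Polynomial L).roots.toFinset.card := by
        refine Finset.card_le_card fun x hx => ?_
        simpa [h0, sub_eq_zero] using hx
    _ ≤ _ := (Multiset.toFinset_card_le _).trans (Polynomial.card_roots' _)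
    _ = n := FiniteField.X_pow_card_sub_X_natDegree_eq L hn

/-- If all `n`-th roots of unity are `m`-th roots of unity, then an element has at most `m` many
`n`-th roots. -/
lemma card_pow_eq_le {L : Type*} [Field L] [Fintype L] [DecidableEq L] {n m : ℕ} (hm : 0 < m)
    (h : ∀ u : L, u ^ n = 1 → u ^ m = 1) {c : L} (hc : c ≠ 0) :
    (Finset.univ.filter fun x : L => x ^ n = c).card ≤ m := by
  rcases (Finset.univ.filter fun x : L => x ^ n = c).eq_empty_or_nonempty with he | ⟨y, hy⟩
  · simp [he]
  have hy' : y ^ n = c := by simpa using hy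
  rcases Nat.eq_zero_or_pos n with rfl | hn
  · have h1 : ∀ u : L, u ^ m = 1 := fun u => h u (pow_zero u)
    have := h1 0
    rw [zero_pow hm.ne'] at this
    exact absurd this zero_ne_one
  have hy0 : y ≠ 0 := by
    rintro rfl
    exact hc (by rw [← hy', zero_pow hn.ne'])
  calc _ ≤ (Polynomial.nthRoots m (y ^ m)).toFinset.card := by
        refine Finset.card_le_card fun x hx => ?_
        have hx' : x ^ n = c := by simpa using hx
        have : (x / y) ^ m = 1 := h _ (by rw [div_pow, hx', hy', div_self hc])
        rw [div_pow, div_eq_one_iff_eq (pow_ne_zero _ hy0)] at this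
        simpa [Polynomial.mem_nthRoots hm] using this
    _ ≤ _ := (Multiset.toFinset_card_le _).trans (Polynomial.card_nthRoots _ _)

/-- The prime field consists of `p` solutions of `x ^ p ^ j = x`, removed by `x ^ p ≠ x`. -/
lemma card_pow_sub_le {L : Type*} [Field L] [Fintype L] [DecidableEq L] {p j : ℕ} (hp : p.Prime)
    [CharP L p] (hj : 0 < j) :
    (Finset.univ.filter fun x : L => x ^ p ^ j = x ∧ x ^ p ≠ x).card ≤ p ^ j - p := by
  have : Fact p.Prime := ⟨hp⟩
  have hprime : p ≤ (Finset.univ.filter fun x : L => x ^ p = x).card := by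
    calc p = (Finset.univ.image (ZMod.castHom dvd_rfl L : ZMod p →+* L)).card := by
          rw [Finset.card_image_of_injective _ (RingHom.injective _), Finset.card_univ, ZMod.card]
      _ ≤ _ := by
          refine Finset.card_le_card fun x hx => ?_
          obtain ⟨a, -, rfl⟩ := Finset.mem_image.1 hx
          rw [Finset.mem_filter, ← map_pow, ZMod.pow_card]
          exact ⟨Finset.mem_univ _, rfl⟩
  have hsub : (Finset.univ.filter fun x : L => x ^ p = x) ⊆
      Finset.univ.filter fun x : L => x ^ p ^ j = x := by
    intro x hx
    simp only [Finset.mem_filter, Finset.mem_univ, true_and] at hx ⊢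
    have := (show Function.IsFixedPt (fun y : L => y ^ p) x from hx).iterate j
    rwa [pow_iterate] at this
  have heq : (Finset.univ.filter fun x : L => x ^ p ^ j = x ∧ x ^ p ≠ x) =
      (Finset.univ.filter fun x : L => x ^ p ^ j = x) \
        Finset.univ.filter fun x : L => x ^ p = x := by
    ext x
    simp
  rw [heq, Finset.card_sdiff_of_subset hsub]
  have := card_pow_eq_self_le (L := L) (Nat.one_lt_pow hj.ne' hp.one_lt)
  omega

lemma mem_subfield_pow {L : Type*} [Field L] [Fintype L] {p n : ℕ} (hp : p.Prime)
    (hL : Fintype.card L = p ^ n) {E : Subfield L} (hE : E ≠ ⊤) {t : L} (ht : t ∈ E) :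
    ∃ j ∈ Finset.Icc 1 (n / 2), t ^ p ^ j = t := by
  classical
  have hcard := Module.card_eq_pow_finrank (K := E) (V := L)
  have hfin : Module.finrank E L ≠ 1 := by
    intro h1
    apply hE
    rw [h1, pow_one] at hcard
    have : Function.Bijective (Subtype.val : E → L) :=
      (Fintype.bijective_iff_injective_and_card _).2 ⟨Subtype.val_injective, hcard.symm⟩
    refine eq_top_iff.2 fun x _ => ?_
    obtain ⟨y, rfl⟩ := this.2 x
    exact y.2
  have hfin0 : 0 < Module.finrank E L := Module.finrank_pos
  obtain ⟨j, -, hj⟩ := (Nat.dvd_prime_pow hp).1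
    (show Fintype.card E ∣ p ^ n from hL ▸ hcard ▸ dvd_pow_self _ hfin0.ne')
  have hj0 : j ≠ 0 := by
    rintro rfl
    have := Fintype.one_lt_card (α := E)
    rw [hj, pow_zero] at this
    omega
  rw [hL, hj, ← pow_mul] at hcard
  have hn : n = j * Module.finrank E L := Nat.pow_right_injective hp.two_le hcard
  have hle : j * 2 ≤ n := hn ▸ Nat.mul_le_mul_left j (by omega)
  refine ⟨j, Finset.mem_Icc.2 ⟨by omega, by omega⟩, ?_⟩
  rw [← hj]
  exact congrArg Subtype.val (FiniteField.pow_card (⟨t, ht⟩ : E))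

/-- If the fixed points of `σ` lie in the copy of `K`, the image of `t ↦ t - σ t` has codimension at
most one, so it contains the kernel of a linear functional. -/
lemma exists_functional {K L : Type*} [Field K] [Fintype K] [Field L] [Fintype L] [Algebra K L]
    (σ : L ≃ₐ[K] L) (hfix : ∀ x, σ x = x → x ^ Fintype.card K = x) :
    ∃ f : L →ₗ[K] K, ∀ b, f b = 0 → ∃ t, t - σ t = b := by
  classical
  let T : L →ₗ[K] L := LinearMap.id - σ.toLinearMap
  have hker : Module.finrank K T.ker ≤ 1 := by
    have h1 : Fintype.card T.ker ≤ Fintype.card K := by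
      refine le_trans ?_ (card_pow_eq_self_le (L := L) (Fintype.one_lt_card (α := K)))
      rw [Fintype.card_subtype]
      refine Finset.card_le_card fun x hx => ?_
      simp only [Finset.mem_filter, Finset.mem_univ, true_and] at hx ⊢
      refine hfix x ?_
      have : x - σ x = 0 := hx
      exact (sub_eq_zero.1 this).symm
    rw [Module.card_eq_pow_finrank (K := K)] at h1
    exact (Nat.pow_le_pow_iff_right (Fintype.one_lt_card (α := K))).1 (by simpa using h1)
  have hquot : Module.finrank K (L ⧸ T.range) ≤ 1 := by
    have h1 := Submodule.finrank_quotient_add_finrank T.range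
    have h2 := T.finrank_range_add_finrank_ker
    omega
  obtain ⟨g, hg⟩ : ∃ g : (L ⧸ T.range) →ₗ[K] K, Function.Injective g := by
    have hv : LinearIndependent K fun _ : Unit => (1 : K) :=
      LinearIndependent.of_subsingleton () one_ne_zero
    refine Module.Free.exists_linearMap_injective_of_linearIndependent_of_lift_rank_le hv ?_
    have hrk : Module.rank K (L ⧸ T.range) ≤ 1 := by
      rw [← Module.finrank_eq_rank]
      exact_mod_cast hquot
    simpa using hrk
  refine ⟨g ∘ₗ T.range.mkQ, fun b hb => ?_⟩
  have : T.range.mkQ b = 0 := hg (by simpa using hb)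
  have hb' : b ∈ T.range := by simpa using this
  exact hb'

/-! ### Comparing the two counts -/


/-- Suppose `d > 4`. Then for every `α ∈ k_D^×` there exist `x, y ∈ k_D^×`
such that `x·σ(y) − σ(x)·y = α` and the ratio `x/y` does not lie in any proper subfield
of `k_D`. Here `k_F = F_q ⊆ k_D = F_{q^d}` and `σ` is the generator of `Gal(k_D/k_F)`
given by `σ(x) = x^(q^r)` with `gcd(r,d) = 1`. -/
theorem stmt_9 (p q d r : ℕ) (hp : p.Prime) (hq : ∃ k : ℕ, 0 < k ∧ q = p ^ k)
    (hd : 4 < d) (hr : Nat.gcd r d = 1)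
    (kF kD : Type) [Field kF] [Field kD] [Algebra kF kD] [Fintype kF] [Fintype kD]
    (hcardF : Fintype.card kF = q) (hcardD : Fintype.card kD = q ^ d)
    (σ : kD ≃ₐ[kF] kD) (hσ : ∀ x : kD, σ x = x ^ q ^ r) :
    ∀ α : kD, α ≠ 0 → ∃ x y : kD, x ≠ 0 ∧ y ≠ 0 ∧
      x * σ y - σ x * y = α ∧
      ∀ E : Subfield kD, x / y ∈ E → E = ⊤ := by
  classical
  intro α hα
  obtain ⟨k, hk, hqk⟩ := hq
  have hq2 : 2 ≤ q := hqk ▸ hp.two_le.trans (Nat.le_self_pow hk.ne' p)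
  have hcardp : Fintype.card kD = p ^ (k * d) := by rw [hcardD, hqk, pow_mul]
  have hchar : CharP kD p := by
    obtain ⟨c, hc⟩ := CharP.exists kD
    obtain ⟨n, hcp, hn⟩ := FiniteField.card kD c
    have : c = p := by
      have h1 : c ∣ p ^ (k * d) := by
        rw [← hcardp, hn]
        exact dvd_pow_self _ n.ne_zero
      exact (Nat.prime_dvd_prime_iff_eq hcp hp).1 (hcp.dvd_of_dvd_pow h1)
    exact this ▸ hc
  have hfix : ∀ x, σ x = x → x ^ q = x := by
    intro x hx
    rw [hσ] at hx
    have := pow_gcd_fixed hcardD hx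
    rwa [hr, pow_one] at this
  have hrank : Module.finrank kF kD = d := by
    have := Module.card_eq_pow_finrank (K := kF) (V := kD)
    rw [hcardD, hcardF] at this
    exact (Nat.pow_right_injective hq2 this).symm
  obtain ⟨f, hf⟩ := exists_functional σ (by rwa [hcardF])
  choose! t₀ ht₀ using hf
  let B : kD →ₗ[kF] kD →ₗ[kF] kF := LinearMap.mk₂ kF (fun x y => f (α * x * σ y))
    (by intros; simp [mul_add, add_mul]) (by intros; simp)
    (by intros; simp [mul_add]) (by intros; simp)
  have hB : ∀ z, B z z = f (α * z * σ z) := fun _ => rfl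
  -- the nonzero zeros of the quadratic form
  set Z := (Finset.univ.filter fun z => B z z = 0).erase 0 with hZ
  have hZcard : q ^ (d - 2) - 1 ≤ Z.card := by
    have h := card_isotropic_ge B
    rw [hcardF, hrank] at h
    rw [hZ, Finset.card_erase_of_mem (by simp)]
    omega
  have hZmem : ∀ z ∈ Z, z ≠ 0 ∧ f (α * z * σ z) = 0 := by
    intro z hz
    simpa [hZ, hB] using hz
  -- `(z, c)` stands for the pair `(g (z, c), z)`; the elements of `kF` move the solution `t₀`.
  let g : kD × kF → kD := fun s => t₀ (α * s.1 * σ s.1) + algebraMap kF kD s.2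
  have hg : ∀ s ∈ Z ×ˢ (Finset.univ : Finset kF), g s - σ (g s) = α * s.1 * σ s.1 := by
    intro s hs
    have h := ht₀ _ (hZmem _ (Finset.mem_product.1 hs).1).2
    simp only [g, map_add, AlgEquiv.commutes]
    rw [add_sub_add_right_eq_sub, h]
  by_contra hcon
  -- a set that contains every `t` with `σ t ≠ t` lying in a proper subfield
  set bad := (Finset.Icc 1 (k * d / 2)).biUnion fun j =>
    Finset.univ.filter fun x : kD => x ^ p ^ j = x ∧ x ^ p ≠ x with hbad
  have hne : ∀ s ∈ Z ×ˢ (Finset.univ : Finset kF), σ (g s) ≠ g s := by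
    intro s hs h
    have h1 := hg s hs
    have h2 := (hZmem _ (Finset.mem_product.1 hs).1).1
    rw [h, sub_self] at h1
    exact mul_ne_zero (mul_ne_zero hα h2) ((map_ne_zero σ).2 h2) h1.symm
  have hmaps : ∀ s ∈ Z ×ˢ (Finset.univ : Finset kF), g s ∈ bad := by
    intro s hs
    obtain ⟨hz, -⟩ := hZmem _ (Finset.mem_product.1 hs).1
    have hσz : σ s.1 ≠ 0 := (map_ne_zero σ).2 hz
    have hex : ∃ E : Subfield kD, g s ∈ E ∧ E ≠ ⊤ := by
      by_contra! hE
      refine hcon ⟨g s * (s.1)⁻¹, (s.1)⁻¹, ?_, inv_ne_zero hz, ?_, ?_⟩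
      · refine mul_ne_zero (fun h => hne s hs ?_) (inv_ne_zero hz)
        rw [h, map_zero]
      · have h := hg s hs
        rw [map_mul, map_inv₀]
        field_simp
        rw [h]
        ring
      · intro E hE'
        rw [mul_div_assoc, div_self (inv_ne_zero hz), mul_one] at hE'
        exact hE E hE'
    obtain ⟨E, hmem, hE⟩ := hex
    obtain ⟨j, hj, hjt⟩ := mem_subfield_pow hp hcardp hE hmem
    refine Finset.mem_biUnion.2 ⟨j, hj, Finset.mem_filter.2 ⟨Finset.mem_univ _, hjt, ?_⟩⟩
    intro h
    apply hne s hs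
    have := (show Function.IsFixedPt (fun y : kD => y ^ p) (g s) from h).iterate (k * r)
    rw [pow_iterate, pow_mul, ← hqk] at this
    rw [hσ]
    exact this
  have hbadcard : bad.card ≤ ∑ j ∈ Finset.Icc 1 (k * d / 2), (p ^ j - p) := by
    refine Finset.card_biUnion_le.trans (Finset.sum_le_sum fun j hj => ?_)
    exact card_pow_sub_le hp (Finset.mem_Icc.1 hj).1
  have hcount : ∀ m, 0 < m → (∀ u : kD, u ^ (q ^ r + 1) = 1 → u ^ m = 1) →
      q * (q ^ (d - 2) - 1) ≤ m * ∑ j ∈ Finset.Icc 1 (k * d / 2), (p ^ j - p) := by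
    intro m hm hroot
    calc q * (q ^ (d - 2) - 1) ≤ (Z ×ˢ (Finset.univ : Finset kF)).card := by
          rw [Finset.card_product, Finset.card_univ, hcardF, mul_comm]
          exact Nat.mul_le_mul_right _ hZcard
      _ ≤ m * bad.card := by
          refine Finset.card_le_mul_card_image_of_maps_to hmaps m fun b hb => ?_
          rcases eq_or_ne ((b - σ b) / α) 0 with h0 | h0
          · have : (Z ×ˢ (Finset.univ : Finset kF)).filter (fun s => g s = b) = ∅ := by
              refine Finset.filter_eq_empty_iff.2 fun s hs hsb => hne s hs ?_
              rw [div_eq_zero_iff, or_iff_left hα, ← hsb, sub_eq_zero] at h0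
              exact h0.symm
            simp [this]
          refine le_trans ?_ (card_pow_eq_le hm hroot h0)
          refine Finset.card_le_card_of_injOn Prod.fst ?_ ?_
          · intro s hs
            obtain ⟨hs, hsb⟩ := Finset.mem_filter.1 hs
            have h := hg s hs
            rw [hsb] at h
            simp only [Finset.coe_filter, Finset.mem_univ, true_and, Set.mem_ofPred_eq]
            rw [h, hσ, pow_succ]
            field_simp
          · rintro ⟨z, c⟩ hs ⟨z', c'⟩ hs' (rfl : z = z')
            have h1 := (Finset.mem_filter.1 hs).2
            have h2 := (Finset.mem_filter.1 hs').2
            have h3 : algebraMap kF kD c = algebraMap kF kD c' :=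
              add_left_cancel (h1.trans h2.symm)
            rw [(algebraMap kF kD).injective h3]
      _ ≤ _ := Nat.mul_le_mul_left m hbadcard
  -- `u ^ (q ^ r + 1) = 1` says `σ u = u⁻¹`, so `σ ∘ σ` fixes `u`.
  have hsq : ∀ u : kD, u ^ (q ^ r + 1) = 1 → u ^ q ^ Nat.gcd (2 * r) d = u := by
    intro u hu
    apply pow_gcd_fixed hcardD
    have h0 : u ≠ 0 := by
      rintro rfl
      rw [zero_pow (by omega)] at hu
      exact zero_ne_one hu
    have h1 : u ^ q ^ r = u⁻¹ := by
      rw [pow_succ] at hu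
      exact eq_inv_of_mul_eq_one_left hu
    rw [two_mul, pow_add, pow_mul, h1, inv_pow, h1, inv_inv]
  rcases Nat.even_or_odd' d with ⟨e, rfl | rfl⟩
  · have hgcd : Nat.gcd (2 * r) (2 * e) = 2 := by
      rw [Nat.gcd_mul_left, Nat.Coprime.coprime_mul_left_right hr]
    have hrodd : ∃ s, r = 2 * s + 1 := by
      rcases Nat.even_or_odd' r with ⟨s, h | h⟩
      · rw [h, Nat.gcd_mul_left] at hr
        omega
      · exact ⟨s, h⟩
    obtain ⟨s, hs⟩ := hrodd
    refine (bound_even hp.two_le hk hqk (by omega : 3 ≤ e)).not_ge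
      (hcount (q + 1) (by omega) fun u hu => ?_)
    have h1 := hsq u hu
    rw [hgcd] at h1
    -- `r` is odd, so `u ^ q ^ 2 = u` gives `u ^ q ^ r = u ^ q`.
    have h2 := (show Function.IsFixedPt (fun y : kD => y ^ q ^ 2) u from h1).iterate s
    rw [pow_iterate, ← pow_mul] at h2
    have h2' : u ^ q ^ (2 * s) = u := h2
    rw [hs, pow_succ, pow_succ q, pow_mul, h2'] at hu
    rw [pow_succ, hu]
  · have hgcd : Nat.gcd (2 * r) (2 * e + 1) = 1 := by
      refine Nat.Coprime.mul_left ?_ hr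
      simp
    -- here `u` is fixed by the `q`-Frobenius, so `σ u = u` and `u ^ 2 = 1`
    refine (bound_odd hp.two_le hk hqk (by omega : 2 ≤ e)).not_ge
      (hcount 2 (by omega) fun u hu => ?_)
    have h1 := hsq u hu
    rw [hgcd, pow_one] at h1
    have h2 := (show Function.IsFixedPt (fun y : kD => y ^ q) u from h1).iterate r
    rw [pow_iterate] at h2
    have h2' : u ^ q ^ r = u := h2
    rw [pow_succ, h2'] at hu
    rw [sq, hu]
end

section
/- Suppose d is odd. Then for every α ∈ k_D^×, the number of pairs (x,y) ∈ k_D × k_D satisfying x·σ(y) − σ(x)·y = α is exactly q^d − q. Moreover, the number of pairs (x,y) ∈ k_D^× × k_D^× with x·σ(y) − σ(x)·y = 0 is exactly (q^d − 1)(q − 1). -/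
/-!
Write `f (x, y) = x σ(y) - σ(x) y`. For `x ≠ 0`, `f (x, y) = 0` says that `y / x` is fixed by `σ`.
The fixed field of `σ` is `k_F` because `gcd(r, d) = 1`, so the zeros of `f` with `x ≠ 0` are the
pairs `(x, c x)` with `c ∈ k_F`. This gives the second count.

For the first count, `f (t x, t c y) = c t σ(t) f (x, y)` for `c ∈ k_F`, so the fibres of `f` over
`α` and `c t σ(t) α` are equinumerous. Since `d` is odd, `q ^ r + 1` is coprime to
`m = 1 + q + ⋯ + q ^ (d - 1)`; as `t σ(t) = t ^ (q ^ r + 1)` and `m`-th powers (norms) lie in `k_F`,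
Bézout shows that every nonzero `β` has the form `c t σ(t)` (`exists_scalar_mul_self_mul`). Hence all
fibres over nonzero `α` have the same size `M`. Any pair in such a fibre has `x ≠ 0`, so counting
all `(q ^ d - 1) q ^ d` pairs with `x ≠ 0` by the value of `f` gives
`(q ^ d - 1) q + (q ^ d - 1) M = (q ^ d - 1) q ^ d`, that is `M = q ^ d - q`.
-/

/-- A common prime divisor `ℓ` would give `q ^ (2 r) = q ^ d = 1` modulo `ℓ`, hence `q = 1` and then
`2 = d = 0` modulo `ℓ`. -/
theorem coprime_pow_add_one_geom_sum (q d r : ℕ) (hdodd : Odd d) (hr : Nat.gcd r d = 1) :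
    Nat.Coprime (q ^ r + 1) (∑ i ∈ Finset.range d, q ^ i) := by
  refine Nat.Coprime.symm (Nat.coprime_of_dvd ?_)
  intro l hl h2 h1
  have := Fact.mk hl
  rw [← ZMod.natCast_eq_zero_iff] at h1 h2
  push_cast at h1 h2
  have hQd : (q : ZMod l) ^ d = 1 := by
    have := mul_geom_sum (q : ZMod l) d
    rw [h2, mul_zero] at this
    exact (sub_eq_zero.mp this.symm)
  have hQr : (q : ZMod l) ^ (2 * r) = 1 := by
    rw [mul_comm, pow_mul, eq_neg_of_add_eq_zero_left h1]; ring
  have hcop : Nat.Coprime (2 * r) d :=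
    Nat.Coprime.mul_left (Nat.coprime_two_left.mpr hdodd) hr
  have hQ : (q : ZMod l) = 1 := (pow_eq_one_iff_of_coprime hcop).mp ⟨hQr, hQd⟩
  rw [hQ] at h1 h2
  have hl2 : l ∣ 2 := by
    rw [← ZMod.natCast_eq_zero_iff]; push_cast; rw [← h1]; norm_num
  have hld : l ∣ d := by
    rw [← ZMod.natCast_eq_zero_iff]; simpa using h2
  have : l ∣ Nat.gcd 2 d := Nat.dvd_gcd hl2 hld
  rw [Nat.coprime_two_left.mpr hdodd] at this
  exact hl.one_lt.ne' (Nat.dvd_one.mp this)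

/-- The fixed points of `z ↦ z ^ q` are the `q` elements of the subfield of order `q`. -/
theorem mem_range_algebraMap_of_pow_card_eq {K L : Type*} [Field K] [Field L] [Algebra K L]
    [Fintype K] (z : L) (hz : z ^ Fintype.card K = z) : ∃ a : K, algebraMap K L a = z := by
  classical
  have hne := FiniteField.X_pow_card_sub_X_ne_zero L (Fintype.one_lt_card (α := K))
  set P : Polynomial L := Polynomial.X ^ Fintype.card K - Polynomial.X with hP
  have hsub : Finset.univ.image (algebraMap K L) ⊆ P.roots.toFinset := by
    intro w hw
    obtain ⟨a, -, rfl⟩ := Finset.mem_image.mp hw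
    rw [Multiset.mem_toFinset, Polynomial.mem_roots hne]
    simp [hP, ← map_pow, FiniteField.pow_card]
  have hcard : P.roots.toFinset.card ≤ (Finset.univ.image (algebraMap K L)).card := by
    rw [Finset.card_image_of_injective _ (algebraMap K L).injective, Finset.card_univ]
    refine (Multiset.toFinset_card_le _).trans ((Polynomial.card_roots' P).trans ?_)
    exact (FiniteField.X_pow_card_sub_X_natDegree_eq L (Fintype.one_lt_card (α := K))).le
  have hmem : z ∈ P.roots.toFinset := by
    rw [Multiset.mem_toFinset, Polynomial.mem_roots hne]
    simp [hP, hz]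
  rw [← Finset.eq_of_subset_of_card_le hsub hcard] at hmem
  obtain ⟨a, -, ha⟩ := Finset.mem_image.mp hmem
  exact ⟨a, ha⟩

/-- Since `z ^ (q ^ d) = z` on `L` and `gcd(r, d) = 1`, being fixed by `z ↦ z ^ (q ^ r)` forces
`z ^ q = z`. -/
theorem fixed_iff_mem_range {K L : Type*} [Field K] [Field L] [Algebra K L] [Fintype K] [Fintype L]
    (q d r : ℕ) (hr : Nat.gcd r d = 1) (hK : Fintype.card K = q) (hL : Fintype.card L = q ^ d)
    (σ : L ≃ₐ[K] L) (hσ : ∀ x : L, σ x = x ^ q ^ r) (z : L) :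
    σ z = z ↔ ∃ a : K, algebraMap K L a = z := by
  constructor
  · intro hz
    have hper : ∀ n : ℕ, Function.IsPeriodicPt (fun x : L => x ^ q) n z ↔ z ^ q ^ n = z := by
      intro n
      rw [Function.IsPeriodicPt, Function.IsFixedPt, pow_iterate]
    have h1 := (hper r).mpr ((hσ z).symm.trans hz)
    have h2 := (hper d).mpr (by rw [← hL]; exact FiniteField.pow_card z)
    have h3 := (hper _).mp (h1.gcd h2)
    rw [hr, pow_one, ← hK] at h3
    exact mem_range_algebraMap_of_pow_card_eq z h3
  · rintro ⟨a, rfl⟩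
    exact σ.commutes a

/-- Here `c = (β ^ v) ^ m` and `t = β ^ u` for a Bézout relation `u (q ^ r + 1) + v m = 1`, where
`m = 1 + q + ⋯ + q ^ (d - 1)`. -/
theorem exists_scalar_mul_self_mul {K L : Type*} [Field K] [Field L] [Algebra K L] [Fintype K]
    [Fintype L] (q d r : ℕ) (hdodd : Odd d) (hr : Nat.gcd r d = 1) (hK : Fintype.card K = q)
    (hL : Fintype.card L = q ^ d) (σ : L ≃ₐ[K] L) (hσ : ∀ x : L, σ x = x ^ q ^ r)
    (β : L) (hβ : β ≠ 0) :
    ∃ c t : L, c ≠ 0 ∧ t ≠ 0 ∧ σ c = c ∧ c * (t * σ t) = β := by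
  obtain ⟨u, v, huv⟩ := Nat.isCoprime_iff_coprime.mpr (coprime_pow_add_one_geom_sum q d r hdodd hr)
  set m := ∑ i ∈ Finset.range d, q ^ i with hm
  refine ⟨(β ^ v) ^ m, β ^ u, pow_ne_zero _ (zpow_ne_zero _ hβ), zpow_ne_zero _ hβ, ?_, ?_⟩
  · have hq1 : 1 ≤ q := by rw [← hK]; exact Fintype.card_pos
    rw [fixed_iff_mem_range q d r hr hK hL σ hσ]
    apply mem_range_algebraMap_of_pow_card_eq
    have hγ : β ^ v ≠ 0 := zpow_ne_zero _ hβ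
    have hone := FiniteField.pow_card_sub_one_eq_one _ hγ
    have hmul : m * q = m + (Fintype.card L - 1) := by
      have hz : ((q : ℤ) - 1) * (m : ℤ) = (q : ℤ) ^ d - 1 := by
        rw [hm]; push_cast; exact mul_geom_sum (q : ℤ) d
      have h1 : 1 ≤ q ^ d := Nat.one_le_pow _ _ hq1
      rw [hL]; zify [h1]; linear_combination hz
    rw [hK, ← pow_mul, hmul, pow_add, hone, mul_one]
  · rw [hσ, ← pow_succ', ← zpow_natCast, ← zpow_natCast, ← zpow_mul, ← zpow_mul, ← zpow_add₀ hβ,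
      add_comm, huv, zpow_one]

/-- Pairs with `x ≠ 0` in the coordinates `(x, y / x)`. -/
def ratioEquiv {L : Type*} [Field L] (P : L → Prop) :
    {xy : L × L // xy.1 ≠ 0 ∧ P (xy.2 / xy.1)} ≃ Lˣ × {c : L // P c} where
  toFun xy := (Units.mk0 xy.1.1 xy.2.1, ⟨xy.1.2 / xy.1.1, xy.2.2⟩)
  invFun uc := ⟨(uc.1, uc.2 * uc.1), uc.1.ne_zero, by simpa using uc.2.2⟩
  left_inv := by
    rintro ⟨⟨x, y⟩, hx, h⟩
    have hx' : x ≠ 0 := hx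
    simp [hx']
  right_inv := by
    rintro ⟨u, c, hc⟩
    ext <;> simp

theorem twisted_eq_zero_iff {L : Type*} [Field L] (σ : L →+* L) (x y : L) (hx : x ≠ 0) :
    x * σ y - σ x * y = 0 ↔ σ (y / x) = y / x := by
  have hσx : σ x ≠ 0 := (map_ne_zero σ).mpr hx
  rw [map_div₀, div_eq_div_iff hσx hx, sub_eq_zero, mul_comm x, mul_comm y]

/-- The scaling `(x, y) ↦ (t x, t c y)` carries the fibre over `1` to the fibre over `c t σ(t)`. -/
theorem card_fiber_eq {L : Type*} [Field L] (σ : L →+* L) (c t : L) (hc : c ≠ 0) (ht : t ≠ 0)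
    (hσc : σ c = c) :
    Nat.card {xy : L × L // xy.1 * σ xy.2 - σ xy.1 * xy.2 = 1} =
      Nat.card {xy : L × L // xy.1 * σ xy.2 - σ xy.1 * xy.2 = c * (t * σ t)} := by
  have hσt : σ t ≠ 0 := (map_ne_zero σ).mpr ht
  refine Nat.card_congr (Equiv.subtypeEquiv
    (Equiv.prodCongr (Equiv.mulLeft₀ t ht) (Equiv.mulLeft₀ (t * c) (mul_ne_zero ht hc))) ?_)
  rintro ⟨x, y⟩
  have hk : c * (t * σ t) ≠ 0 := mul_ne_zero hc (mul_ne_zero ht hσt)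
  have : t * x * σ (t * c * y) - σ (t * x) * (t * c * y)
      = c * (t * σ t) * (x * σ y - σ x * y) := by
    simp only [map_mul, hσc]; ring
  simp only [Equiv.prodCongr_apply, Prod.map, Equiv.mulLeft₀_apply]
  rw [this, mul_eq_left₀ hk]

/-- Counting by fibres, with `n = |L| - 1`: if the fibre of `f` over `0` has `n * a` elements and the other `n` fibres
all have `M` elements, then the source has `n * (a + M)` elements. -/
theorem card_of_const_fibers {S L : Type*} [Finite S] [Field L] [Fintype L] (f : S → L) (a M : ℕ)
    (h0 : Nat.card {s // f s = 0} = (Fintype.card L - 1) * a)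
    (h1 : ∀ α : L, α ≠ 0 → Nat.card {s // f s = α} = M) :
    Nat.card S = (Fintype.card L - 1) * (a + M) := by
  classical
  rw [← Nat.card_congr (Equiv.sigmaFiberEquiv f), Nat.card_sigma,
    ← Finset.add_sum_erase _ _ (Finset.mem_univ (0 : L)), h0,
    Finset.sum_congr rfl (fun α hα => h1 α (Finset.ne_of_mem_erase hα)), Finset.sum_const,
    Finset.card_erase_of_mem (Finset.mem_univ _), Finset.card_univ, smul_eq_mul, mul_add]


/-- Let `k_F = F_q ⊆ k_D = F_{q^d}` with `d` odd, and let `σ` be the generator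
of `Gal(k_D/k_F)` given by `σ(x) = x^(q^r)`, `gcd(r,d) = 1`. Then for every `α ∈ k_D^×` the
number of pairs `(x,y) ∈ k_D × k_D` with `x·σ(y) − σ(x)·y = α` is exactly `q^d − q`, and the
number of pairs `(x,y) ∈ k_D^× × k_D^×` with `x·σ(y) − σ(x)·y = 0` is exactly
`(q^d − 1)(q − 1)`. -/
theorem stmt_11 (p q d r : ℕ) (hp : p.Prime) (hq : ∃ k : ℕ, 0 < k ∧ q = p ^ k)
    (hd : 0 < d) (hdodd : Odd d) (hr : Nat.gcd r d = 1)
    (kF kD : Type) [Field kF] [Field kD] [Algebra kF kD] [Fintype kF] [Fintype kD]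
    (hcardF : Fintype.card kF = q) (hcardD : Fintype.card kD = q ^ d)
    (σ : kD ≃ₐ[kF] kD) (hσ : ∀ x : kD, σ x = x ^ q ^ r) :
    (∀ α : kD, α ≠ 0 →
        Nat.card {xy : kD × kD // xy.1 * σ xy.2 - σ xy.1 * xy.2 = α} = q ^ d - q) ∧
    Nat.card {xy : kD × kD // xy.1 ≠ 0 ∧ xy.2 ≠ 0 ∧ xy.1 * σ xy.2 - σ xy.1 * xy.2 = 0}
        = (q ^ d - 1) * (q - 1) := by
  have hfix := fixed_iff_mem_range q d r hr hcardF hcardD σ hσ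
  have hzero : ∀ x y : kD, x ≠ 0 → (x * σ y - σ x * y = 0 ↔ σ (y / x) = y / x) :=
    fun x y hx => twisted_eq_zero_iff (σ : kD →+* kD) x y hx
  have hunits : Nat.card kDˣ = q ^ d - 1 := by
    rw [Nat.card_units, Nat.card_eq_fintype_card, hcardD]
  have hD : 1 < q ^ d := by rw [← hcardD]; exact Fintype.one_lt_card
  constructor
  · have hconst : ∀ α : kD, α ≠ 0 →
        Nat.card {xy : kD × kD // xy.1 * σ xy.2 - σ xy.1 * xy.2 = α} =
          Nat.card {xy : kD × kD // xy.1 * σ xy.2 - σ xy.1 * xy.2 = 1} := by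
      intro α hα
      obtain ⟨c, t, hc, ht, hσc, rfl⟩ :=
        exists_scalar_mul_self_mul q d r hdodd hr hcardF hcardD σ hσ α hα
      exact (card_fiber_eq (σ : kD →+* kD) c t hc ht hσc).symm
    have hFix : Nat.card {c : kD // σ c = c} = q := by
      rw [← hcardF, ← Nat.card_eq_fintype_card]
      refine (Nat.card_congr (Equiv.ofBijective
        (fun a : kF => (⟨algebraMap kF kD a, σ.commutes a⟩ : {c : kD // σ c = c})) ⟨?_, ?_⟩)).symm
      · intro a b hab
        exact (algebraMap kF kD).injective (congrArg Subtype.val hab)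
      · rintro ⟨c, hc⟩
        obtain ⟨a, rfl⟩ := (hfix c).mp hc
        exact ⟨a, rfl⟩
    have hcount := card_of_const_fibers
      (fun s : {xy : kD × kD // xy.1 ≠ 0} => s.1.1 * σ s.1.2 - σ s.1.1 * s.1.2) q
      (Nat.card {xy : kD × kD // xy.1 * σ xy.2 - σ xy.1 * xy.2 = 1})
      (by
        rw [hcardD, ← hunits]
        conv_rhs => rw [← hFix]
        rw [← Nat.card_prod]
        refine Nat.card_congr ((Equiv.subtypeSubtypeEquivSubtypeInter _
          (fun xy : kD × kD => xy.1 * σ xy.2 - σ xy.1 * xy.2 = 0)).trans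
          ((Equiv.subtypeEquivRight ?_).trans (ratioEquiv (fun c => σ c = c))))
        rintro ⟨x, y⟩
        exact and_congr_right (fun hx => hzero x y hx))
      (by
        intro α hα
        rw [← hconst α hα]
        refine Nat.card_congr (Equiv.subtypeSubtypeEquivSubtype
          (q := fun xy : kD × kD => xy.1 * σ xy.2 - σ xy.1 * xy.2 = α) ?_)
        intro xy hxy h0
        simp only [h0, map_zero, zero_mul, sub_zero] at hxy
        exact hα hxy.symm)
    have htotal : Nat.card {xy : kD × kD // xy.1 ≠ 0} = (q ^ d - 1) * q ^ d := by
      rw [← hunits, ← hcardD, ← Nat.card_eq_fintype_card, ← Nat.card_prod]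
      refine Nat.card_congr ((Equiv.prodSubtypeFstEquivSubtypeProd (p := fun x : kD => x ≠ 0)).trans
        (Equiv.prodCongr unitsEquivNeZero.symm (Equiv.refl kD)))
    rw [htotal, hcardD] at hcount
    have hM := Nat.eq_of_mul_eq_mul_left (by omega) hcount
    intro α hα
    rw [hconst α hα]
    omega
  · have hFix : Nat.card {c : kD // c ≠ 0 ∧ σ c = c} = q - 1 := by
      rw [← hcardF, ← Nat.card_eq_fintype_card, ← Nat.card_units]
      refine (Nat.card_congr (Equiv.ofBijective
        (fun a : kFˣ => (⟨algebraMap kF kD a,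
          (map_ne_zero _).mpr a.ne_zero, σ.commutes a⟩ : {c : kD // c ≠ 0 ∧ σ c = c}))
        ⟨?_, ?_⟩)).symm
      · intro a b hab
        exact Units.ext ((algebraMap kF kD).injective (congrArg Subtype.val hab))
      · rintro ⟨c, hc0, hc⟩
        obtain ⟨a, rfl⟩ := (hfix c).mp hc
        exact ⟨Units.mk0 a ((map_ne_zero _).mp hc0), rfl⟩
    rw [← hunits, ← hFix, ← Nat.card_prod]
    refine Nat.card_congr ((Equiv.subtypeEquivRight ?_).trans
      (ratioEquiv (fun c => c ≠ 0 ∧ σ c = c)))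
    rintro ⟨x, y⟩
    refine and_congr_right (fun hx => and_congr ?_ (hzero x y hx))
    have hx' : x ≠ 0 := hx
    simp [hx']
end

section
/- Let q be an odd prime power and let d be a positive even integer. Then the number of pairs (x,y) ∈ F_{q^d} × F_{q^d} with x^{q+1} + y^{q+1} = −1 equals q^d + 1 + (−q)^{d/2}·(q − q^3)/(q + 1) − (q + 1), i.e. equals q^d − q − q(q−1)·(−q)^{d/2}. -/
/-!
Write `Q = q ^ d = |K|` and fix a primitive additive character `ψ : K → ℂ` with `ψ (x ^ q) = ψ x`
(the standard character of the prime field composed with the trace). The sums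
`S a = ∑ x, ψ (a * x ^ (q + 1))` control the point count `N`, since
`Q * N = ∑ a, ψ a * S a ^ 2`.

* The Frobenius-invariance of `ψ` makes `S a * S (-a)` a Weil-type sum that collapses onto the
  kernel of the additive map `x ↦ a ^ q * x ^ q ^ 2 + a * x`, on which `ψ (a * x ^ (q + 1)) = 1`.
  As `-1` is a `(q + 1)`-th power in `K`, `S (-a) = S a`, so `S a ^ 2 = Q * W a`, where `W a` is the
  size of that kernel (`hermSum_sq`).
* Hence `N = ∑ a, ψ a * W a`. Exchanging summations and substituting `a = b * x⁻¹ ^ (q + 1)` gives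
  `N = ∑ (S b - 1)` over the roots `b` of `b ^ q + b = 0` (`card_eq_sum`).
* For a nonzero such `b` the kernel is the subfield with `q ^ 2` elements, so
  `S b = ± q ^ (d / 2 + 1)`. The sign is determined by the congruence `S b ≡ 1` modulo `q + 1` in the
  algebraic integers, which holds since the nonzero fibres of `x ↦ x ^ (q + 1)` have `q + 1`
  elements; thus `S b = (-q) ^ (d / 2 + 1)` (`hermSum_eq`).

The equation `b ^ q + b = 0` has `q - 1` nonzero roots, whence
`N = (Q - 1) + (q - 1) * ((-q) ^ (d / 2 + 1) - 1)`.
-/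

open Finset in
/-- In a field with a primitive `n`-th root of unity, a nonzero `n`-th power has exactly `n`
`n`-th roots. -/
lemma card_roots_of_pow {K : Type} [Field K] [Fintype K] [DecidableEq K] {n : ℕ} (hn : 0 < n)
    {ζ : K} (hζ : IsPrimitiveRoot ζ n) {u c : K} (hu : u ≠ 0) (hc : c ^ n = u) :
    #{x : K | x ^ n = u} = n := by
  have h1 := hζ.card_nthRoots u
  rw [if_pos ⟨c, hc⟩] at h1
  have h2 : ({x : K | x ^ n = u} : Finset K) = (Polynomial.nthRoots n u).toFinset := by
    ext x
    simp [Polynomial.mem_nthRoots hn]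
  rw [h2, Multiset.toFinset_card_of_nodup (hζ.nthRoots_nodup hu), h1]

/-- A finite field contains primitive `n`-th roots of unity for every `n` dividing `|K| - 1`. -/
lemma exists_primitive_root {K : Type} [Field K] [Fintype K] {n : ℕ}
    (hn : n ∣ Fintype.card K - 1) : ∃ ζ : K, IsPrimitiveRoot ζ n := by
  classical
  obtain ⟨g, hg⟩ := IsCyclic.exists_ofOrder_eq_natCard (α := Kˣ)
  rw [Nat.card_eq_fintype_card, Fintype.card_units] at hg
  obtain ⟨k, hk⟩ := hn
  have h1 := IsPrimitiveRoot.orderOf g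
  rw [hg] at h1
  have hpos : 0 < Fintype.card K - 1 := by
    have := Fintype.one_lt_card (α := K)
    omega
  have h2 := h1.pow hpos (a := k) (b := n) (by rw [hk, mul_comm])
  exact ⟨_, IsPrimitiveRoot.coe_units_iff.2 h2⟩

/-- If `2 * n` divides `|K| - 1`, then `-1` is an `n`-th power. -/
lemma exists_pow_eq_neg_one {K : Type} [Field K] [Fintype K] {n : ℕ} (hn0 : 0 < n)
    (hn : 2 * n ∣ Fintype.card K - 1) : ∃ η : K, η ^ n = -1 := by
  obtain ⟨ζ, hζ⟩ := exists_primitive_root hn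
  exact ⟨ζ, (hζ.pow (by omega) (mul_comm 2 n)).eq_neg_one_of_two_right⟩

/-- The standard additive character of the prime field composed with the trace is primitive, and
invariant under powers of Frobenius because the trace is. -/
lemma exists_invariant_char {K : Type} [Field K] [Fintype K] (p k : ℕ) [Fact p.Prime]
    [CharP K p] : ∃ ψ : AddChar K ℂ, ψ.IsPrimitive ∧ ∀ x, ψ (x ^ p ^ k) = ψ x := by
  let _ := ZMod.algebra K p
  have : NeZero p := ⟨(Fact.out : p.Prime).ne_zero⟩
  let ψ : AddChar K ℂ :=
    (ZMod.stdAddChar (N := p)).compAddMonoidHom (Algebra.trace (ZMod p) K).toAddMonoidHom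
  have hval : ∀ x, ψ x = ZMod.stdAddChar (Algebra.trace (ZMod p) K x) := fun _ => rfl
  refine ⟨ψ, AddChar.IsPrimitive.of_ne_one ?_, ?_⟩
  · intro h
    obtain ⟨x, hx⟩ := Algebra.trace_surjective (ZMod p) K 1
    have h1 : ψ x = 1 := by rw [h]; rfl
    rw [hval, hx, ← AddChar.map_zero_eq_one (ZMod.stdAddChar (N := p))] at h1
    exact one_ne_zero (ZMod.injective_stdAddChar h1)
  · have hp : ∀ x, ψ (x ^ p) = ψ x := by
      intro x
      rw [hval, hval]
      congr 1
      have := Algebra.trace_eq_of_algEquiv (FiniteField.frobeniusAlgEquiv (ZMod p) K p) x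
      rw [← this]
      congr 1
      simp [ZMod.card]
    intro x
    induction k with
    | zero => simp
    | succ k ih => rw [pow_succ, pow_mul, hp, ih]

open Finset in
lemma sum_char_mul {K : Type} [Field K] [Fintype K] [DecidableEq K] {ψ : AddChar K ℂ}
    (hψ : ψ.IsPrimitive) (c : K) :
    ∑ x, ψ (c * x) = if c = 0 then (Fintype.card K : ℂ) else 0 := by
  have := AddChar.sum_mulShift c hψ
  simp_rw [mul_comm c]
  rw [this]
  split_ifs <;> simp

/-- The exponential sum `∑ x, ψ (a * x ^ (q + 1))` attached to the Hermitian-type form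
`x ↦ x ^ (q + 1)`. -/
noncomputable def hermSum {K : Type} [Field K] [Fintype K] (ψ : AddChar K ℂ) (q : ℕ) (a : K) : ℂ :=
  ∑ x, ψ (a * x ^ (q + 1))

/-- The kernel of the additive map `x ↦ a ^ q * x ^ q ^ 2 + a * x`. -/
def hermKer {K : Type} [Field K] [Fintype K] [DecidableEq K] (q : ℕ) (a : K) : Finset K :=
  {x | a ^ q * x ^ q ^ 2 + a * x = 0}

open Finset in
/-- The polarised sum `S a * S (-a)` only sees the kernel: the shift `u = x + v` makes the exponent
additive in `v ^ q`, up to Frobenius. -/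
lemma hermSum_mul_neg {K : Type} [Field K] [Fintype K] [DecidableEq K] {ψ : AddChar K ℂ}
    (hψ : ψ.IsPrimitive) {q : ℕ} (hq : q ≠ 0) (hfrob : ∀ x y : K, (x + y) ^ q = x ^ q + y ^ q)
    (hinv : ∀ x, ψ (x ^ q) = ψ x) (a : K) :
    hermSum ψ q a * hermSum ψ q (-a)
      = Fintype.card K * ∑ x ∈ hermKer q a, ψ (a * x ^ (q + 1)) := by
  have hbij : Function.Bijective (fun v : K => v ^ q) := by
    rw [← Finite.injective_iff_bijective]
    intro x y hxy
    have h := hfrob (x - y) y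
    simp only [sub_add_cancel] at h
    simp only at hxy
    rw [hxy] at h
    have h2 : (x - y) ^ q = 0 := by linear_combination -h
    exact sub_eq_zero.1 (pow_eq_zero_iff hq |>.1 h2)
  have hterm : ∀ x v : K, ψ (a * (x + v) ^ (q + 1)) * ψ (-a * v ^ (q + 1))
      = ψ (a * x ^ (q + 1)) * ψ ((a ^ q * x ^ q ^ 2 + a * x) * v ^ q) := by
    intro x v
    have h1 : a * (x + v) ^ (q + 1) + -a * v ^ (q + 1)
        = a * x ^ (q + 1) + a * x * v ^ q + a * x ^ q * v := by
      rw [pow_succ, hfrob]; ring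
    have h2 : ψ (a * x ^ q * v) = ψ (a ^ q * x ^ q ^ 2 * v ^ q) := by
      rw [← hinv]; congr 1; ring
    rw [← AddChar.map_add_eq_mul, h1, AddChar.map_add_eq_mul, AddChar.map_add_eq_mul, h2,
      add_mul, AddChar.map_add_eq_mul]
    ring
  unfold hermSum
  rw [sum_mul_sum, sum_comm]
  calc ∑ v, ∑ u, ψ (a * u ^ (q + 1)) * ψ (-a * v ^ (q + 1))
      = ∑ v, ∑ x, ψ (a * (x + v) ^ (q + 1)) * ψ (-a * v ^ (q + 1)) := by
        refine sum_congr rfl fun v _ => ?_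
        exact (Equiv.sum_comp (Equiv.addRight v)
          (fun u => ψ (a * u ^ (q + 1)) * ψ (-a * v ^ (q + 1)))).symm
    _ = ∑ x, ψ (a * x ^ (q + 1)) * ∑ v, ψ ((a ^ q * x ^ q ^ 2 + a * x) * v ^ q) := by
        rw [sum_comm]
        simp_rw [hterm, mul_sum]
    _ = ∑ x, ψ (a * x ^ (q + 1)) *
          if a ^ q * x ^ q ^ 2 + a * x = 0 then (Fintype.card K : ℂ) else 0 := by
        refine sum_congr rfl fun x _ => ?_
        rw [hbij.sum_comp (fun w => ψ ((a ^ q * x ^ q ^ 2 + a * x) * w)), sum_char_mul hψ]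
    _ = _ := by
        simp only [hermKer, sum_filter, mul_sum]
        refine sum_congr rfl fun x _ => ?_
        split_ifs <;> ring

open Finset in
lemma hermSum_sq {K : Type} [Field K] [Fintype K] [DecidableEq K] {ψ : AddChar K ℂ}
    (hψ : ψ.IsPrimitive) {q : ℕ} (hq : Odd q) (h2 : (2 : K) ≠ 0)
    (hfrob : ∀ x y : K, (x + y) ^ q = x ^ q + y ^ q)
    (hinv : ∀ x, ψ (x ^ q) = ψ x) {η : K} (hη : η ^ (q + 1) = -1) (a : K) :
    hermSum ψ q a ^ 2 = Fintype.card K * #(hermKer q a) := by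
  have hη0 : η ≠ 0 := by
    rintro rfl
    simp at hη
  have hneg : hermSum ψ q (-a) = hermSum ψ q a := by
    unfold hermSum
    rw [← Equiv.sum_comp (Equiv.mulLeft₀ η hη0) (fun x => ψ (a * x ^ (q + 1)))]
    refine sum_congr rfl fun x _ => ?_
    change _ = ψ (a * (η * x) ^ (q + 1))
    rw [mul_pow, hη]
    congr 1; ring
  -- `t ^ q = -t` gives `ψ t = ψ (-t)`; applied to `t / 2` this says `ψ t = ψ (t / 2) ^ 2 = 1`.
  have htriv : ∀ t : K, t ^ q = -t → ψ t = 1 := by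
    intro t ht
    have h2q : (2 : K) ^ q = 2 := by
      have := hfrob 1 1
      simpa [one_add_one_eq_two] using this
    have h3 : (t / 2) ^ q = -(t / 2) := by rw [div_pow, ht, h2q]; ring
    have h4 : ψ (t / 2) = ψ (-(t / 2)) := by rw [← h3, hinv]
    calc ψ t = ψ (t / 2 + t / 2) := by congr 1; field_simp; ring
      _ = ψ (t / 2) * ψ (-(t / 2)) := by rw [AddChar.map_add_eq_mul, ← h4]
      _ = 1 := by rw [← AddChar.map_add_eq_mul, add_neg_cancel, AddChar.map_zero_eq_one]
  have hsum : ∑ x ∈ hermKer q a, ψ (a * x ^ (q + 1)) = #(hermKer q a) := by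
    rw [← nsmul_one, ← sum_const]
    refine sum_congr rfl fun x hx => htriv _ ?_
    simp only [hermKer, mem_filter, mem_univ, true_and] at hx
    calc (a * x ^ (q + 1)) ^ q = a ^ q * x ^ q ^ 2 * x ^ q := by ring
      _ = -(a * x ^ (q + 1)) := by linear_combination x ^ q * hx
  rw [sq]
  nth_rw 2 [← hneg]
  rw [hermSum_mul_neg hψ hq.pos.ne' hfrob hinv, hsum]

open Finset in
/-- Counting points by additive characters, with `S a ^ 2` replaced by the kernel size. -/
lemma card_eq_sum {K : Type} [Field K] [Fintype K] [DecidableEq K] {ψ : AddChar K ℂ}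
    (hψ : ψ.IsPrimitive) {q : ℕ} (hq2 : q ^ 2 ≠ 0)
    (hsq : ∀ a, hermSum ψ q a ^ 2 = Fintype.card K * #(hermKer q a)) :
    (Nat.card {xy : K × K // xy.1 ^ (q + 1) + xy.2 ^ (q + 1) = -1} : ℂ)
      = ∑ b ∈ ({b | b ^ q + b = 0} : Finset K), (hermSum ψ q b - 1) := by
  have hQ : (Fintype.card K : ℂ) ≠ 0 := by
    exact_mod_cast Fintype.card_ne_zero
  have h1 : (Fintype.card K : ℂ) *
      Nat.card {xy : K × K // xy.1 ^ (q + 1) + xy.2 ^ (q + 1) = -1}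
      = ∑ a : K, ψ a * hermSum ψ q a ^ 2 := by
    have e1 : (Fintype.card K : ℂ) *
        Nat.card {xy : K × K // xy.1 ^ (q + 1) + xy.2 ^ (q + 1) = -1}
        = ∑ x : K, ∑ y : K, ∑ a : K, ψ ((x ^ (q + 1) + y ^ (q + 1) + 1) * a) := by
      simp_rw [sum_char_mul hψ, ← Fintype.sum_prod_type'
        (f := fun x y : K => if x ^ (q + 1) + y ^ (q + 1) + 1 = 0 then (Fintype.card K : ℂ) else 0)]
      rw [← sum_filter, sum_const, nsmul_eq_mul, mul_comm, Nat.card_eq_fintype_card,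
        Fintype.card_subtype]
      simp only [add_eq_zero_iff_eq_neg]
    rw [e1]
    calc ∑ x : K, ∑ y : K, ∑ a : K, ψ ((x ^ (q + 1) + y ^ (q + 1) + 1) * a)
        = ∑ x : K, ∑ a : K, ∑ y : K, ψ ((x ^ (q + 1) + y ^ (q + 1) + 1) * a) :=
          sum_congr rfl fun x _ => sum_comm
      _ = ∑ a : K, ∑ x : K, ∑ y : K, ψ ((x ^ (q + 1) + y ^ (q + 1) + 1) * a) := sum_comm
      _ = _ := by
        refine sum_congr rfl fun a _ => ?_
        rw [sq, hermSum, sum_mul_sum, mul_sum]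
        refine sum_congr rfl fun x _ => ?_
        rw [mul_sum]
        refine sum_congr rfl fun y _ => ?_
        rw [← AddChar.map_add_eq_mul, ← AddChar.map_add_eq_mul]
        congr 1; ring
  have h2 : (Nat.card {xy : K × K // xy.1 ^ (q + 1) + xy.2 ^ (q + 1) = -1} : ℂ)
      = ∑ a : K, ψ a * #(hermKer q a) := by
    apply mul_left_cancel₀ hQ
    rw [h1, mul_sum]
    refine sum_congr rfl fun a _ => ?_
    rw [hsq]; ring
  have h3 : ∑ a : K, ψ a * #(hermKer q a)
      = ∑ x : K, ∑ a : K, if a ^ q * x ^ q ^ 2 + a * x = 0 then ψ a else 0 := by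
    rw [sum_comm]
    refine sum_congr rfl fun a _ => ?_
    rw [← sum_filter, sum_const, nsmul_eq_mul, mul_comm]
    rfl
  have hx0 : (∑ a : K, if a ^ q * (0 : K) ^ q ^ 2 + a * 0 = 0 then ψ a else 0)
      = 0 := by
    have := sum_char_mul hψ 1
    rw [if_neg one_ne_zero] at this
    simp only [one_mul] at this
    rw [← this]
    refine sum_congr rfl fun a _ => if_pos ?_
    rw [zero_pow hq2, mul_zero, mul_zero, add_zero]
  have hx : ∀ x : K, x ≠ 0 → (∑ a : K, if a ^ q * x ^ q ^ 2 + a * x = 0 then ψ a else 0)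
      = ∑ b ∈ ({b | b ^ q + b = 0} : Finset K), ψ (b * x⁻¹ ^ (q + 1)) := by
    intro x hx
    have hx' : x⁻¹ ^ (q + 1) ≠ 0 := pow_ne_zero _ (inv_ne_zero hx)
    rw [sum_filter, ← Equiv.sum_comp (Equiv.mulRight₀ _ hx')]
    refine sum_congr rfl fun b _ => ?_
    change (if (b * x⁻¹ ^ (q + 1)) ^ q * x ^ q ^ 2 + b * x⁻¹ ^ (q + 1) * x = 0
      then ψ (b * x⁻¹ ^ (q + 1)) else 0) = _
    have key : (b * x⁻¹ ^ (q + 1)) ^ q * x ^ q ^ 2 + b * x⁻¹ ^ (q + 1) * x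
        = (b ^ q + b) * x⁻¹ ^ q := by
      have e : x⁻¹ * x = 1 := inv_mul_cancel₀ hx
      have e' : x⁻¹ ^ q ^ 2 * x ^ q ^ 2 = 1 := by rw [← mul_pow, e, one_pow]
      calc _ = b ^ q * x⁻¹ ^ q * (x⁻¹ ^ q ^ 2 * x ^ q ^ 2) + b * x⁻¹ ^ q * (x⁻¹ * x) := by ring
        _ = _ := by rw [e, e']; ring
    have key2 : (b * x⁻¹ ^ (q + 1)) ^ q * x ^ q ^ 2 + b * x⁻¹ ^ (q + 1) * x = 0
        ↔ b ^ q + b = 0 := by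
      rw [key, mul_eq_zero, or_iff_left (pow_ne_zero _ (inv_ne_zero hx))]
    simp only [key2]
  have hS : ∀ b : K, hermSum ψ q b - 1 = ∑ x : K, if x = 0 then 0 else ψ (b * x⁻¹ ^ (q + 1)) := by
    intro b
    have e1 : hermSum ψ q b = ∑ x : K, ψ (b * x⁻¹ ^ (q + 1)) :=
      (Equiv.sum_comp (Equiv.inv K) (fun x => ψ (b * x ^ (q + 1)))).symm
    have e2 : ∑ x : K, (if x = 0 then (1 : ℂ) else 0) = 1 := by simp
    rw [e1, ← e2, ← sum_sub_distrib]
    refine sum_congr rfl fun x _ => ?_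
    split_ifs with h
    · simp [h]
    · simp
  rw [h2, h3]
  simp_rw [hS]
  refine Eq.trans ?_ sum_comm
  refine sum_congr rfl fun x _ => ?_
  by_cases h : x = 0
  · subst h
    rw [hx0]
    simp
  · simp only [if_neg h]
    exact hx x h

open Finset in
/-- The value of `S b` when `b ^ (q - 1) = -1`; the sign comes from `S b ≡ 1` modulo `q + 1`. -/
lemma hermSum_eq {K : Type} [Field K] [Fintype K] [DecidableEq K] {ψ : AddChar K ℂ} {q m : ℕ}
    (hq : 2 < q) (hK : Fintype.card K = q ^ (2 * m)) (hdvd : q ^ 2 - 1 ∣ Fintype.card K - 1)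
    (hsq : ∀ a, hermSum ψ q a ^ 2 = Fintype.card K * #(hermKer q a))
    {b : K} (hb0 : b ≠ 0) (hb : b ^ q + b = 0) :
    hermSum ψ q b = (-(q : ℂ)) ^ (m + 1) := by
  have hq2 : 3 ^ 2 ≤ q ^ 2 := Nat.pow_le_pow_left hq 2
  have hker : #(hermKer q b) = q ^ 2 := by
    obtain ⟨ζ, hζ⟩ := exists_primitive_root hdvd
    have h1 := card_roots_of_pow (by omega) hζ one_ne_zero (one_pow _)
    have h2 : hermKer q b = insert 0 ({x : K | x ^ (q ^ 2 - 1) = 1} : Finset K) := by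
      ext x
      simp only [hermKer, mem_filter, mem_univ, true_and, mem_insert]
      have e1 : x ^ q ^ 2 = x ^ (q ^ 2 - 1) * x := by
        rw [← pow_succ]; congr 1; omega
      have e2 : b ^ q * x ^ q ^ 2 + b * x = -b * (x * (x ^ (q ^ 2 - 1) - 1)) := by
        rw [eq_neg_of_add_eq_zero_left hb, e1]; ring
      rw [e2, mul_eq_zero, or_iff_right (neg_ne_zero.2 hb0), mul_eq_zero, sub_eq_zero]
    rw [h2, card_insert_of_notMem, h1]
    · omega
    · have : q ^ 2 - 1 ≠ 0 := by omega
      simp [this]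
  have hS2 : hermSum ψ q b ^ 2 = ((-(q : ℂ)) ^ (m + 1)) ^ 2 := by
    rw [hsq, hker, hK]
    push_cast
    rw [← pow_mul (-(q : ℂ)), mul_comm (m + 1) 2, pow_mul (-(q : ℂ)), neg_sq]
    ring
  obtain ⟨A, hA, hSA⟩ : ∃ A : ℂ, IsIntegral ℤ A ∧ hermSum ψ q b = 1 + (q + 1) * A := by
    have hdvd' : q + 1 ∣ Fintype.card K - 1 := by
      refine dvd_trans ⟨q - 1, ?_⟩ hdvd
      simpa using Nat.sq_sub_sq q 1
    obtain ⟨ζ, hζ⟩ := exists_primitive_root hdvd'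
    have hψint : ∀ x, IsIntegral ℤ (ψ x) := by
      intro x
      refine IsIntegral.of_pow (n := Fintype.card K) Fintype.card_pos ?_
      rw [← AddChar.map_nsmul_eq_pow, card_nsmul_eq_zero, AddChar.map_zero_eq_one]
      exact isIntegral_one
    refine ⟨∑ c ∈ (univ.erase (0 : K)).image (fun x => x ^ (q + 1)), ψ (b * c),
      IsIntegral.sum _ fun _ _ => hψint _, ?_⟩
    unfold hermSum
    rw [← add_sum_erase univ _ (mem_univ (0 : K))]
    congr 1
    · simp
    rw [sum_comp (fun c => ψ (b * c)) (fun x : K => x ^ (q + 1)), mul_sum]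
    refine sum_congr rfl fun c hc => ?_
    simp only [mem_image, mem_erase, mem_univ, and_true] at hc
    obtain ⟨x, hx, rfl⟩ := hc
    have hx' : x ^ (q + 1) ≠ 0 := pow_ne_zero _ hx
    have h1 := card_roots_of_pow (by omega) hζ hx' rfl
    have h2 : ({y ∈ univ.erase (0 : K) | y ^ (q + 1) = x ^ (q + 1)} : Finset K)
        = ({y : K | y ^ (q + 1) = x ^ (q + 1)} : Finset K) := by
      ext y
      simp only [mem_filter, mem_erase, mem_univ, and_true, true_and, and_iff_right_iff_imp]
      rintro h rfl
      rw [zero_pow (by omega)] at h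
      exact hx' h.symm
    rw [h2, h1, nsmul_eq_mul]
    push_cast
    ring
  rcases sq_eq_sq_iff_eq_or_eq_neg.1 hS2 with h | h
  · exact h
  exfalso
  -- `-q ≡ 1` modulo `q + 1`, so the wrong sign would make `2 / (q + 1)` an algebraic integer.
  obtain ⟨k, hk⟩ : (-(q : ℤ)) - 1 ∣ (-(q : ℤ)) ^ (m + 1) - 1 := by
    simpa using sub_dvd_pow_sub_pow (-(q : ℤ)) 1 (m + 1)
  have hk' : (-(q : ℂ)) ^ (m + 1) - 1 = (-(q : ℂ) - 1) * k := by exact_mod_cast hk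
  have h2 : (2 : ℂ) = (q + 1) * (k - A) := by
    linear_combination -hk' + h - hSA
  have hint : IsIntegral ℤ ((k : ℂ) - A) := (isIntegral_algebraMap (x := k)).sub hA
  have hq1 : (q : ℂ) + 1 ≠ 0 := by exact_mod_cast Nat.succ_ne_zero q
  have hrat : (k : ℂ) - A = algebraMap ℚ ℂ (2 / (q + 1)) := by
    rw [map_div₀]
    simp only [map_add, map_natCast, map_one, map_ofNat]
    rw [eq_div_iff hq1, h2]; ring
  rw [hrat, isIntegral_algebraMap_iff (algebraMap ℚ ℂ).injective,
    IsIntegrallyClosed.isIntegral_iff] at hint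
  obtain ⟨y, hy⟩ := hint
  have hq1' : (q : ℚ) + 1 ≠ 0 := by positivity
  rw [eq_div_iff hq1', eq_intCast] at hy
  have hy' : y * ((q : ℤ) + 1) = 2 := by exact_mod_cast hy
  have : (q : ℤ) + 1 ≤ 2 := Int.le_of_dvd (by norm_num) ⟨y, by rw [← hy']; ring⟩
  omega


/-- Let `q` be an odd prime power and `d` a positive even integer. Then the
number of pairs `(x,y) ∈ F_{q^d} × F_{q^d}` with `x^(q+1) + y^(q+1) = −1` equals
`q^d + 1 + (−q)^(d/2)·(q − q³)/(q + 1) − (q + 1)`, i.e. equals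
`q^d − q − q(q−1)·(−q)^(d/2)`. -/
theorem stmt_12 (q d : ℕ) (hq : IsPrimePow q) (hqodd : Odd q) (hd : 0 < d) (hdeven : Even d)
    (K : Type) [Field K] [Fintype K] (hK : Fintype.card K = q ^ d) :
    (Nat.card {xy : K × K // xy.1 ^ (q + 1) + xy.2 ^ (q + 1) = -1} : ℤ)
        = (q : ℤ) ^ d + 1 + (-(q : ℤ)) ^ (d / 2) * (((q : ℤ) - (q : ℤ) ^ 3) / ((q : ℤ) + 1))
            - ((q : ℤ) + 1) ∧
    (Nat.card {xy : K × K // xy.1 ^ (q + 1) + xy.2 ^ (q + 1) = -1} : ℤ)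
        = (q : ℤ) ^ d - (q : ℤ) - (q : ℤ) * ((q : ℤ) - 1) * (-(q : ℤ)) ^ (d / 2) := by
  classical
  obtain ⟨m, rfl⟩ := hdeven
  rw [← two_mul] at hK hd ⊢
  rw [Nat.mul_div_cancel_left m two_pos]
  have hm : 0 < m := by omega
  have hq1 : 1 < q := hq.one_lt
  have hq3 : 2 < q := by
    obtain ⟨r, hr⟩ := hqodd
    omega
  obtain ⟨n, hn⟩ := id hqodd
  have hdvd : q ^ 2 - 1 ∣ Fintype.card K - 1 := by
    rw [hK, pow_mul]
    simpa using Nat.sub_dvd_pow_sub_pow (q ^ 2) 1 m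
  have hfac : q ^ 2 - 1 = (q + 1) * (q - 1) := by simpa using Nat.sq_sub_sq q 1
  obtain ⟨η, hη⟩ : ∃ η : K, η ^ (q + 1) = -1 := by
    refine exists_pow_eq_neg_one (by omega) (dvd_trans ⟨n, ?_⟩ hdvd)
    rw [hfac, hn]
    simp only [Nat.add_sub_cancel]
    ring
  obtain ⟨ε, hε⟩ : ∃ ε : K, ε ^ (q - 1) = -1 := by
    refine exists_pow_eq_neg_one (by omega) (dvd_trans ⟨n + 1, ?_⟩ hdvd)
    rw [hfac, hn]
    simp only [Nat.add_sub_cancel]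
    ring
  obtain ⟨p, k, hp, hk, hpk⟩ := id hq
  have hp' : p.Prime := hp.nat_prime
  have : Fact p.Prime := ⟨hp'⟩
  have : CharP K p := charP_of_card_eq_prime_pow (f := k * (2 * m)) (by rw [hK, ← hpk, ← pow_mul])
  have hp2 : p ≠ 2 := by
    rintro rfl
    have h2 : Even q := by
      rw [← hpk]
      exact (Nat.even_pow.2 ⟨even_two, by omega⟩)
    exact (Nat.not_even_iff_odd.2 hqodd) h2
  have h2 : (2 : K) ≠ 0 := Ring.two_ne_zero (by rwa [ringChar.eq K p])
  have hfrob : ∀ x y : K, (x + y) ^ q = x ^ q + y ^ q := by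
    intro x y
    rw [← hpk]
    exact add_pow_char_pow x y p k
  obtain ⟨ψ, hψ, hinv⟩ := exists_invariant_char (K := K) p k
  rw [hpk] at hinv
  have hsq := hermSum_sq hψ hqodd h2 hfrob hinv hη
  have hroots : ({b | b ^ q + b = 0} : Finset K)
      = insert 0 ({b : K | b ^ (q - 1) = -1} : Finset K) := by
    ext x
    simp only [Finset.mem_filter, Finset.mem_univ, true_and, Finset.mem_insert]
    have e1 : x ^ q + x = x * (x ^ (q - 1) - -1) := by
      have : x ^ q = x ^ (q - 1) * x := by rw [← pow_succ]; congr 1; omega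
      rw [this]; ring
    rw [e1, mul_eq_zero, sub_eq_zero]
  have hcard : ({b : K | b ^ (q - 1) = -1} : Finset K).card = q - 1 := by
    obtain ⟨ζ, hζ⟩ := exists_primitive_root (K := K) (n := q - 1)
      (dvd_trans ⟨q + 1, by rw [hfac]; ring⟩ hdvd)
    exact card_roots_of_pow (by omega) hζ (neg_ne_zero.2 one_ne_zero) hε
  have hnot : (0 : K) ∉ ({b : K | b ^ (q - 1) = -1} : Finset K) := by
    have : q - 1 ≠ 0 := by omega
    simp [this]
  have hNC := card_eq_sum hψ (pow_ne_zero 2 (by omega)) hsq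
  rw [hroots, Finset.sum_insert hnot] at hNC
  have hconst : ∑ b ∈ ({b : K | b ^ (q - 1) = -1} : Finset K), (hermSum ψ q b - 1)
      = ((q : ℂ) - 1) * ((-(q : ℂ)) ^ (m + 1) - 1) := by
    rw [Finset.sum_congr rfl (g := fun _ => (-(q : ℂ)) ^ (m + 1) - 1), Finset.sum_const, hcard,
      nsmul_eq_mul, Nat.cast_sub hq1.le, Nat.cast_one]
    intro b hb
    have hb0 : b ≠ 0 := fun h => hnot (h ▸ hb)
    have hbq : b ∈ ({b | b ^ q + b = 0} : Finset K) := by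
      rw [hroots]
      exact Finset.mem_insert_of_mem hb
    rw [hermSum_eq hq3 hK hdvd hsq hb0 (by simpa using hbq)]
  have hzero : hermSum ψ q (0 : K) = (q : ℂ) ^ (2 * m) := by
    simp [hermSum, hK]
  rw [hconst, hzero] at hNC
  have hNZ : (Nat.card {xy : K × K // xy.1 ^ (q + 1) + xy.2 ^ (q + 1) = -1} : ℤ)
      = (q : ℤ) ^ (2 * m) - 1 + ((q : ℤ) - 1) * ((-(q : ℤ)) ^ (m + 1) - 1) := by
    exact_mod_cast hNC
  -- The division by `q + 1` is exact: `q - q ^ 3 = (q + 1) * (q * (1 - q))`.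
  have hdiv : ((q : ℤ) - (q : ℤ) ^ 3) / ((q : ℤ) + 1) = q * (1 - q) := by
    rw [show (q : ℤ) - (q : ℤ) ^ 3 = ((q : ℤ) + 1) * (q * (1 - q)) by ring]
    exact Int.mul_ediv_cancel_left _ (by omega)
  rw [hdiv, hNZ]
  constructor <;> ring
end
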